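/- arXiv:1607.05035 — 2 statements merged into one kernel-verified Lean document; each statement's English description precedes it below -/
import Mathlib

section
/- For every mesh size h = 1/m and every spline degree p ≥ 1, the inverse inequality |u|_1 ≤ 2√3 · h^{-1} · ‖u‖_0 holds for all u ∈ S_0, with the constant 2√3 independent of h and p. -/
noncomputable section

open MeasureTheory Set

namespace SplineMG

/-- The `j`-th piece of the uniform partition of `[0,1]` into `m` subintervals of
length `h = 1/m`; the first and last pieces are extended to `-∞` resp. `+∞`
(the spline is extended polynomially outside `[0,1]`). -/
def pieceSet (m j : ℕ) : Set ℝ :=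
  (if j = 0 then Iic ((1 : ℝ) / m) else Icc ((j : ℝ) / m) (((j : ℝ) + 1) / m)) ∪
  (if j = m - 1 then Ici (((m : ℝ) - 1) / m) else ∅)

/-- `u : ℝ → ℝ` belongs to the univariate spline space `S` of degree `p` and maximal
smoothness `C^{p-1}` on the uniform partition of `(0,1)` into `m` intervals of
length `h = 1/m`. -/
def IsSpline (m p : ℕ) (u : ℝ → ℝ) : Prop :=
  ContDiffOn ℝ (p - 1 : ℕ) u (Ioo (0 : ℝ) 1) ∧
  ∀ j < m, ∃ q : Polynomial ℝ, q.natDegree ≤ p ∧ ∀ x ∈ pieceSet m j, u x = q.eval x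

/-- `u` belongs to the subspace `S₀` of `S`: all odd derivatives of order `< p`
vanish at both endpoints. -/
def IsSpline0 (m p : ℕ) (u : ℝ → ℝ) : Prop :=
  IsSpline m p u ∧
  ∀ l : ℕ, 2 * l + 1 < p →
    iteratedDeriv (2 * l + 1) u 0 = 0 ∧ iteratedDeriv (2 * l + 1) u 1 = 0

/-- The `L²(0,1)` inner product. -/
def ip0 (u v : ℝ → ℝ) : ℝ := ∫ x in Ioo (0 : ℝ) 1, u x * v x

/-- The squared `L²(0,1)` norm `‖u‖₀²`. -/
def l2normSq (u : ℝ → ℝ) : ℝ := ∫ x in Ioo (0 : ℝ) 1, u x ^ 2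

/-- The `L²(0,1)` norm `‖u‖₀`. -/
def l2norm (u : ℝ → ℝ) : ℝ := Real.sqrt (l2normSq u)

/-- The squared `H¹(0,1)` seminorm `|u|₁²`. -/
def h1semiSq (u : ℝ → ℝ) : ℝ := ∫ x in Ioo (0 : ℝ) 1, deriv u x ^ 2

/-- The `H¹(0,1)` seminorm `|u|₁`. -/
def h1semi (u : ℝ → ℝ) : ℝ := Real.sqrt (h1semiSq u)

/-- The squared full `H¹(0,1)` norm. -/
def h1normSq (u : ℝ → ℝ) : ℝ := l2normSq u + h1semiSq u

/-- `u` belongs to `S₁`, the `L²(0,1)`-orthogonal complement of `S₀` in `S`. -/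
def IsSpline1 (m p : ℕ) (u : ℝ → ℝ) : Prop :=
  IsSpline m p u ∧ ∀ v, IsSpline0 m p v → ip0 u v = 0

/-- `v = Q₀ u` is the `L²(0,1)`-orthogonal projection of `u` onto `S₀`. -/
def IsL2Proj0 (m p : ℕ) (u v : ℝ → ℝ) : Prop :=
  IsSpline0 m p v ∧ ∀ w, IsSpline0 m p w → ip0 (u - v) w = 0

/-- The component predicate: `false ↦ S₀`, `true ↦ S₁`. -/
def IsSplineC (m p : ℕ) : Bool → (ℝ → ℝ) → Prop
  | false => IsSpline0 m p
  | true => IsSpline1 m p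

/-- The tensor-product spline space `S^d = S ⊗ ⋯ ⊗ S` on `(0,1)^d`. -/
def TensorSpline (d m p : ℕ) : Submodule ℝ ((Fin d → ℝ) → ℝ) :=
  Submodule.span ℝ {u | ∃ f : Fin d → ℝ → ℝ, (∀ i, IsSpline m p (f i)) ∧
    u = fun x => ∏ i, f i (x i)}

/-- The subspace `S_α = S_{α₁} ⊗ ⋯ ⊗ S_{α_d}` of `S^d`, for `α ∈ {0,1}^d`
(`false ↦ 0`, `true ↦ 1`). -/
def TensorSplineSub (d m p : ℕ) (α : Fin d → Bool) : Submodule ℝ ((Fin d → ℝ) → ℝ) :=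
  Submodule.span ℝ {u | ∃ f : Fin d → ℝ → ℝ, (∀ i, IsSplineC m p (α i) (f i)) ∧
    u = fun x => ∏ i, f i (x i)}

/-- The open unit cube `Ω = (0,1)^d`. -/
def cube (d : ℕ) : Set (Fin d → ℝ) := Set.univ.pi fun _ => Ioo (0 : ℝ) 1

/-- The `i`-th partial derivative. -/
def pd (d : ℕ) (i : Fin d) (u : (Fin d → ℝ) → ℝ) : (Fin d → ℝ) → ℝ :=
  fun x => deriv (fun t => u (Function.update x i t)) (x i)

/-- The `L²(Ω)` inner product on the unit cube. -/
def ipd (d : ℕ) (u v : (Fin d → ℝ) → ℝ) : ℝ := ∫ x in cube d, u x * v x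

/-- The squared `L²(Ω)` norm. -/
def l2normSqD (d : ℕ) (u : (Fin d → ℝ) → ℝ) : ℝ := ∫ x in cube d, u x ^ 2

/-- The bilinear form `a(u,v) = ∫_Ω (∇u·∇v + uv) dx`. -/
def aForm (d : ℕ) (u v : (Fin d → ℝ) → ℝ) : ℝ :=
  ∫ x in cube d, (∑ i, pd d i u x * pd d i v x) + u x * v x

/-- The squared `H¹(Ω)` seminorm. -/
def h1semiSqD (d : ℕ) (u : (Fin d → ℝ) → ℝ) : ℝ :=
  ∫ x in cube d, ∑ i, pd d i u x ^ 2

/-- The squared full `H¹(Ω)` norm. -/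
def h1normSqD (d : ℕ) (u : (Fin d → ℝ) → ℝ) : ℝ := l2normSqD d u + h1semiSqD d u

/-- `v = Q_α u` is the `L²(Ω)`-orthogonal projection of `u` onto `S_α`. -/
def IsL2ProjSub (d m p : ℕ) (α : Fin d → Bool) (u v : (Fin d → ℝ) → ℝ) : Prop :=
  v ∈ TensorSplineSub d m p α ∧ ∀ w ∈ TensorSplineSub d m p α, ipd d (u - v) w = 0

/-- The coarse tensor-product spline space `(S_c)^d` (with `m/2` knot spans of
width `2h` per direction). -/
def TensorSplineCoarse (d m p : ℕ) : Submodule ℝ ((Fin d → ℝ) → ℝ) :=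
  TensorSpline d (m / 2) p

/-- `v = T_c u` is the `a(·,·)`-orthogonal (Galerkin) projection of `u` onto `(S_c)^d`. -/
def IsGalerkinCoarseProj (d m p : ℕ) (u v : (Fin d → ℝ) → ℝ) : Prop :=
  v ∈ TensorSplineCoarse d m p ∧ ∀ w ∈ TensorSplineCoarse d m p, aForm d (u - v) w = 0

end SplineMG

namespace SplineMG

/-- sum of the element integrals of the squares -/
def NN (m : ℕ) (q : ℕ → Polynomial ℝ) : ℝ :=
  ∑ j ∈ Finset.range m, ∫ x in ((j : ℝ) / m)..(((j + 1 : ℕ) : ℝ) / m), (q j).eval x ^ 2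

lemma poly_ii (r : Polynomial ℝ) (a b : ℝ) :
    IntervalIntegrable (fun x => r.eval x) volume a b :=
  r.continuous.intervalIntegrable a b

lemma poly_ii2 (r : Polynomial ℝ) (a b : ℝ) :
    IntervalIntegrable (fun x => r.eval x ^ 2) volume a b :=
  (r.continuous.pow 2).intervalIntegrable a b

lemma base_elem (q : Polynomial ℝ) (hq : q.natDegree ≤ 1) (a b m : ℝ) (hm : 0 < m)
    (hab : b - a = 1 / m) :
    ∫ x in a..b, q.derivative.eval x ^ 2 ≤ 12 * m ^ 2 * ∫ x in a..b, q.eval x ^ 2 := by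
  obtain ⟨d, c, rfl⟩ := Polynomial.exists_eq_X_add_C_of_natDegree_le_one hq
  have e1 : ∫ x in a..b, (Polynomial.C d * Polynomial.X + Polynomial.C c).eval x ^ 2
      = (b - a) * (c + d * ((a + b) / 2)) ^ 2 + d ^ 2 * (b - a) ^ 3 / 12 := by
    rw [intervalIntegral.integral_eq_sub_of_hasDerivAt
      (f := fun x => c ^ 2 * x + c * d * x ^ 2 + d ^ 2 * x ^ 3 / 3) _ (poly_ii2 _ a b)]
    · ring
    · intro x _
      have h := (((hasDerivAt_id x).const_mul (c ^ 2)).add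
        ((hasDerivAt_pow 2 x).const_mul (c * d))).add
        (((hasDerivAt_pow 3 x).const_mul (d ^ 2)).div_const 3)
      refine h.congr_deriv ?_
      simp
      ring
  have e2 : ∫ x in a..b, (Polynomial.C d * Polynomial.X + Polynomial.C c).derivative.eval x ^ 2
      = (b - a) * d ^ 2 := by
    simp
  rw [e1, e2, hab]
  have h1 : 0 ≤ 12 * m ^ 2 * (1 / m * (c + d * ((a + b) / 2)) ^ 2) := by positivity
  have h2 : 12 * m ^ 2 * (d ^ 2 * (1 / m) ^ 3 / 12) = 1 / m * d ^ 2 := by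
    field_simp
  rw [mul_add, h2]
  linarith

lemma step_elem (q : Polynomial ℝ) (a b K : ℝ) (hK : 0 < K) (hab : a ≤ b) :
    ∫ x in a..b, q.derivative.eval x ^ 2 ≤
      ((q * q.derivative).eval b - (q * q.derivative).eval a)
      + (K * (∫ x in a..b, q.eval x ^ 2)
        + (∫ x in a..b, q.derivative.derivative.eval x ^ 2) / K) / 2 := by
  have h : ∫ x in a..b, (q * q.derivative).derivative.eval x
      = (q * q.derivative).eval b - (q * q.derivative).eval a :=
    intervalIntegral.integral_eq_sub_of_hasDerivAt
      (fun x _ => (q * q.derivative).hasDerivAt x) (poly_ii _ a b)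
  rw [← h, ← intervalIntegral.integral_const_mul, ← intervalIntegral.integral_div,
    ← intervalIntegral.integral_add ((poly_ii2 q a b).const_mul K) ((poly_ii2 _ a b).div_const K),
    ← intervalIntegral.integral_div,
    ← intervalIntegral.integral_add (poly_ii _ a b)
      ((((poly_ii2 q a b).const_mul K).add ((poly_ii2 _ a b).div_const K)).div_const 2)]
  refine intervalIntegral.integral_mono_on hab (poly_ii2 _ a b)
    ((poly_ii _ a b).add
      ((((poly_ii2 q a b).const_mul K).add ((poly_ii2 _ a b).div_const K)).div_const 2)) ?_
  intro x _
  simp only [Polynomial.derivative_mul, Polynomial.eval_add, Polynomial.eval_mul]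
  generalize q.eval x = A
  generalize q.derivative.eval x = B
  generalize q.derivative.derivative.eval x = D
  have : 0 ≤ (K * A + D) ^ 2 / K := by positivity
  have e : (K * A + D) ^ 2 / K = K * A ^ 2 + 2 * (A * D) + D ^ 2 / K := by
    field_simp
    ring
  rw [e] at this
  nlinarith

lemma telesc (m : ℕ) (hm : 1 ≤ m) (F : ℕ → Polynomial ℝ)
    (hF : ∀ j, j + 1 < m → (F j).eval (((j + 1 : ℕ) : ℝ) / m)
      = (F (j + 1)).eval (((j + 1 : ℕ) : ℝ) / m))
    (h0 : (F 0).eval 0 = 0) (h1 : (F (m - 1)).eval 1 = 0) :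
    ∑ j ∈ Finset.range m, ((F j).eval (((j + 1 : ℕ) : ℝ) / m) - (F j).eval ((j : ℝ) / m)) = 0 := by
  have key : ∀ n, n + 1 ≤ m → ∑ j ∈ Finset.range (n + 1),
      ((F j).eval (((j + 1 : ℕ) : ℝ) / m) - (F j).eval ((j : ℝ) / m))
      = (F n).eval (((n + 1 : ℕ) : ℝ) / m) := by
    intro n
    induction n with
    | zero => intro _; simp [h0]
    | succ n ih =>
      intro h
      rw [Finset.sum_range_succ, ih (by omega), hF n (by omega)]
      ring
  have := key (m - 1) (by omega)
  rw [show m - 1 + 1 = m by omega] at this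
  rw [this, div_self (by positivity), h1]

lemma main_poly (m : ℕ) (hm : 1 ≤ m) : ∀ (p e : ℕ) (q : ℕ → Polynomial ℝ),
    (∀ j < m, (q j).natDegree ≤ p + 1) →
    (∀ j, j + 1 < m → ∀ i < p + 1,
      (Polynomial.derivative^[i] (q j)).eval (((j + 1 : ℕ) : ℝ) / m)
      = (Polynomial.derivative^[i] (q (j + 1))).eval (((j + 1 : ℕ) : ℝ) / m)) →
    (∀ i < p + 1, (i + e) % 2 = 0 → (Polynomial.derivative^[i] (q 0)).eval 0 = 0 ∧
      (Polynomial.derivative^[i] (q (m - 1))).eval 1 = 0) →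
    NN m (fun j => (q j).derivative) ≤ 12 * (m : ℝ) ^ 2 * NN m q := by
  have hm0 : (0 : ℝ) < m := by exact_mod_cast hm
  intro p
  induction p with
  | zero =>
    intro e q hd _ _
    unfold NN
    rw [Finset.mul_sum]
    refine Finset.sum_le_sum fun j hj => ?_
    refine base_elem (q j) (by simpa using hd j (Finset.mem_range.1 hj)) _ _ _ hm0 ?_
    push_cast
    field_simp
    ring
  | succ p ih =>
    intro e q hd hc hb
    have hK : (0 : ℝ) < 12 * (m : ℝ) ^ 2 := by positivity
    have IH := ih (e + 1) (fun j => (q j).derivative)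
      (fun j hj => (Polynomial.natDegree_derivative_le _).trans (by have := hd j hj; omega))
      (fun j hj i hi => by
        simpa only [Function.iterate_succ_apply] using hc j hj (i + 1) (by omega))
      (fun i hi h => by
        simpa only [Function.iterate_succ_apply] using hb (i + 1) (by omega) (by omega))
    have T := telesc m hm (fun j => q j * (q j).derivative)
      (fun j hj => by
        have a := hc j hj 0 (by omega)
        have b := hc j hj 1 (by omega)
        simp only [Function.iterate_zero, id, Function.iterate_one] at a b
        simp only [Polynomial.eval_mul, a, b])
      (by
        rcases Nat.mod_two_eq_zero_or_one e with h | h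
        · have := (hb 0 (by omega) (by omega)).1
          simp at this
          simp [this]
        · have := (hb 1 (by omega) (by omega)).1
          simp at this
          simp [this])
      (by
        rcases Nat.mod_two_eq_zero_or_one e with h | h
        · have := (hb 0 (by omega) (by omega)).2
          simp at this
          simp [this]
        · have := (hb 1 (by omega) (by omega)).2
          simp at this
          simp [this])
    have S : NN m (fun j => (q j).derivative) ≤
        0 + (12 * (m : ℝ) ^ 2 * NN m q
          + NN m (fun j => (q j).derivative.derivative) / (12 * (m : ℝ) ^ 2)) / 2 := by
      rw [← T]
      unfold NN
      rw [Finset.mul_sum, Finset.sum_div, ← Finset.sum_add_distrib, Finset.sum_div,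
        ← Finset.sum_add_distrib]
      refine Finset.sum_le_sum fun j hj => ?_
      refine step_elem (q j) _ _ _ hK ?_
      gcongr
      omega
    have : NN m (fun j => (q j).derivative.derivative) / (12 * (m : ℝ) ^ 2)
        ≤ NN m (fun j => (q j).derivative) := by
      rw [div_le_iff₀ hK]
      linarith
    linarith

lemma integral_pieces (m : ℕ) (hm : 1 ≤ m) (f : ℝ → ℝ) (q : ℕ → Polynomial ℝ)
    (h : ∀ j < m, ∀ x ∈ Ioo ((j : ℝ) / m) (((j + 1 : ℕ) : ℝ) / m), f x = (q j).eval x) :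
    ∫ x in Ioo (0 : ℝ) 1, f x ^ 2 = NN m q := by
  have hm0 : (0 : ℝ) < m := by exact_mod_cast hm
  have hle : ∀ j : ℕ, (j : ℝ) / m ≤ ((j + 1 : ℕ) : ℝ) / m := fun j => by
    gcongr; omega
  have hint : ∀ j < m, IntervalIntegrable (fun x => f x ^ 2) volume
      ((j : ℝ) / m) (((j + 1 : ℕ) : ℝ) / m) := by
    intro j hj
    rw [intervalIntegrable_iff_integrableOn_Ioo_of_le (hle j)]
    refine IntegrableOn.congr_fun
      ((intervalIntegrable_iff_integrableOn_Ioo_of_le (hle j)).1 (poly_ii2 (q j) _ _)) ?_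
      measurableSet_Ioo
    intro x hx
    simp only [h j hj x hx]
  have := intervalIntegral.sum_integral_adjacent_intervals
    (a := fun j : ℕ => (j : ℝ) / m) (n := m) (f := fun x => f x ^ 2) (μ := volume) hint
  simp only [Nat.cast_zero, zero_div, div_self hm0.ne'] at this
  rw [← integral_Ioc_eq_integral_Ioo, ← intervalIntegral.integral_of_le zero_le_one, ← this]
  unfold NN
  refine Finset.sum_congr rfl fun j hj => ?_
  rw [intervalIntegral.integral_of_le (hle j), intervalIntegral.integral_of_le (hle j),
    integral_Ioc_eq_integral_Ioo, integral_Ioc_eq_integral_Ioo]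
  refine setIntegral_congr_fun measurableSet_Ioo fun x hx => ?_
  simp only [h j (Finset.mem_range.1 hj) x hx]

lemma iterDeriv_poly (q : Polynomial ℝ) (i : ℕ) :
    iteratedDeriv i (fun x => q.eval x) = fun x => (Polynomial.derivative^[i] q).eval x := by
  induction i with
  | zero => simp
  | succ i ih =>
    rw [iteratedDeriv_succ, ih]
    funext x
    rw [Polynomial.deriv, Function.iterate_succ_apply']

lemma iterDeriv_local (u : ℝ → ℝ) (q : Polynomial ℝ) (s : Set ℝ) (x : ℝ) (hs : s ∈ nhds x)
    (h : ∀ y ∈ s, u y = q.eval y) (i : ℕ) :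
    iteratedDeriv i u x = (Polynomial.derivative^[i] q).eval x := by
  have : u =ᶠ[nhds x] fun y => q.eval y := by
    filter_upwards [hs] with y hy using h y hy
  rw [this.iteratedDeriv_eq, iterDeriv_poly]

lemma Ioo_sub_piece (m j : ℕ) (hm : 1 ≤ m) :
    Ioo ((j : ℝ) / m) (((j + 1 : ℕ) : ℝ) / m) ⊆ pieceSet m j := by
  intro x hx
  left
  split_ifs with h
  · subst h
    simpa using hx.2.le
  · have := hx.2.le
    push_cast at this
    exact ⟨hx.1.le, this⟩

/-- Theorem `thm:inverse`: for every mesh size `h = 1/m` and every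
spline degree `p ≥ 1`, the inverse inequality `|u|₁ ≤ 2√3 · h⁻¹ · ‖u‖₀` holds for
all `u ∈ S₀`, with the constant `2√3` independent of `h` and `p`. -/
theorem inverse_inequality_S0 :
    ∀ m p : ℕ, 1 ≤ m → 1 ≤ p → ∀ u : ℝ → ℝ, IsSpline0 m p u →
      h1semi u ≤ 2 * Real.sqrt 3 * (m : ℝ) * l2norm u := by
  intro m p hm hp u hu
  obtain ⟨⟨hcd, hpoly⟩, hbd⟩ := hu
  have hm0 : (0 : ℝ) < m := by exact_mod_cast hm
  have hpoly' : ∀ j : ℕ, ∃ q : Polynomial ℝ, j < m →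
      q.natDegree ≤ p ∧ ∀ x ∈ pieceSet m j, u x = q.eval x := by
    intro j
    by_cases hj : j < m
    · obtain ⟨q, h⟩ := hpoly j hj
      exact ⟨q, fun _ => h⟩
    · exact ⟨0, fun h => absurd h hj⟩
  choose q hq using hpoly'
  obtain ⟨p, rfl⟩ : ∃ n, p = n + 1 := ⟨p - 1, by omega⟩
  have hin : ∀ j < m, ∀ i, ∀ x ∈ Ioo ((j : ℝ) / m) (((j + 1 : ℕ) : ℝ) / m),
      iteratedDeriv i u x = (Polynomial.derivative^[i] (q j)).eval x := by
    intro j hj i x hx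
    exact iterDeriv_local u (q j) _ x (isOpen_Ioo.mem_nhds hx)
      (fun y hy => (hq j hj).2 y (Ioo_sub_piece m j hm hy)) i
  have hlt : ∀ j : ℕ, (j : ℝ) / m < ((j + 1 : ℕ) : ℝ) / m := fun j => by
    gcongr; omega
  have main := main_poly m hm p 1 q (fun j hj => (hq j hj).1)
    (by
      intro j hj i hi
      set z : ℝ := ((j + 1 : ℕ) : ℝ) / m with hz
      have hz01 : z ∈ Ioo (0 : ℝ) 1 := by
        constructor
        · positivity
        · rw [hz, div_lt_one hm0]
          exact_mod_cast hj
      have hcont : ContinuousAt (iteratedDeriv i u) z := by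
        have h1 : ContDiffAt ℝ ((p + 1 - 1 : ℕ)) u z :=
          hcd.contDiffAt (isOpen_Ioo.mem_nhds hz01)
        have h2 : ContinuousOn (iteratedDerivWithin i u (Ioo 0 1)) (Ioo 0 1) :=
          hcd.continuousOn_iteratedDerivWithin (by exact_mod_cast (by omega))
            isOpen_Ioo.uniqueDiffOn
        have h3 := h2.congr (fun x hx => (iteratedDerivWithin_of_isOpen isOpen_Ioo hx).symm)
        exact h3.continuousAt (isOpen_Ioo.mem_nhds hz01)
      have l1 : Filter.Tendsto (iteratedDeriv i u) (nhdsWithin z (Iio z))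
          (nhds ((Polynomial.derivative^[i] (q j)).eval z)) := by
        refine Filter.Tendsto.congr' ?_
          ((Polynomial.derivative^[i] (q j)).continuous.continuousAt.tendsto.mono_left
            nhdsWithin_le_nhds)
        filter_upwards [Ioo_mem_nhdsLT (hlt j)] with x hx
        exact (hin j (by omega) i x hx).symm
      have l2 : Filter.Tendsto (iteratedDeriv i u) (nhdsWithin z (Ioi z))
          (nhds ((Polynomial.derivative^[i] (q (j + 1))).eval z)) := by
        refine Filter.Tendsto.congr' ?_
          ((Polynomial.derivative^[i] (q (j + 1))).continuous.continuousAt.tendsto.mono_left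
            nhdsWithin_le_nhds)
        filter_upwards [Ioo_mem_nhdsGT (hlt (j + 1))] with x hx
        exact (hin (j + 1) hj i x hx).symm
      have a := tendsto_nhds_unique l1 (hcont.tendsto.mono_left nhdsWithin_le_nhds)
      have b := tendsto_nhds_unique l2 (hcont.tendsto.mono_left nhdsWithin_le_nhds)
      rw [a, b])
    (by
      intro i hi hpar
      obtain ⟨l, rfl⟩ : ∃ l, i = 2 * l + 1 := ⟨i / 2, by omega⟩
      obtain ⟨h0, h1⟩ := hbd l hi
      constructor
      · refine Eq.trans (Eq.symm ?_) h0
        refine iterDeriv_local u (q 0) (Iic ((1 : ℝ) / m)) 0 (Iic_mem_nhds (by positivity)) ?_ _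
        intro y hy
        refine (hq 0 (by omega)).2 y (Or.inl ?_)
        simpa using hy
      · refine Eq.trans (Eq.symm ?_) h1
        refine iterDeriv_local u (q (m - 1)) (Ici (((m : ℝ) - 1) / m)) 1
          (Ici_mem_nhds (by rw [div_lt_one hm0]; linarith)) ?_ _
        intro y hy
        refine (hq (m - 1) (by omega)).2 y (Or.inr ?_)
        simpa using hy)
  have i0 := integral_pieces m hm u q (fun j hj x hx =>
    (hq j hj).2 x (Ioo_sub_piece m j hm hx))
  have i1 := integral_pieces m hm (deriv u) (fun j => (q j).derivative) (fun j hj x hx => by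
    simpa using hin j hj 1 x hx)
  unfold h1semi l2norm h1semiSq l2normSq
  rw [i0, i1]
  have hc : 2 * Real.sqrt 3 * (m : ℝ) = Real.sqrt (12 * (m : ℝ) ^ 2) := by
    symm
    rw [Real.sqrt_eq_iff_mul_self_eq (by positivity) (by positivity)]
    have := Real.mul_self_sqrt (show (0 : ℝ) ≤ 3 by norm_num)
    linear_combination (-4) * (m : ℝ) ^ 2 * this
  rw [hc, ← Real.sqrt_mul (by positivity)]
  exact Real.sqrt_le_sqrt main

end SplineMG
end
end

section
/- There exists a constant c > 0 independent of the mesh size h and the spline degree p such that for every u ∈ S: (1/2)|u|_1^2 ≤ |Q_0 u|_1^2 + |u − Q_0 u|_1^2 ≤ c |u|_1^2, and likewise c^{-1}‖u‖_{H^1}^2 ≤ ‖Q_0 u‖_{H^1}^2 + ‖u − Q_0 u‖_{H^1}^2 ≤ c ‖u‖_{H^1}^2 for the full H^1(0,1)-norm. In other words, the L2-orthogonal splitting S = S_0 ⊕ S_1, u = Q_0 u + (I − Q_0)u, is H^1-stable uniformly in h and p. -/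
noncomputable section

open MeasureTheory Set

namespace SplineMG

lemma mem_pieceSet {m j : ℕ} (hj : j < m) (x : ℝ) :
    x ∈ pieceSet m j ↔ (j = 0 ∨ (j : ℝ) / m ≤ x) ∧ (j = m - 1 ∨ x ≤ ((j : ℝ) + 1) / m) := by
  have hm : (0 : ℝ) < m := by exact_mod_cast (by omega : 0 < m)
  unfold pieceSet
  by_cases h0 : j = 0 <;> by_cases h1 : j = m - 1
  · subst h0
    have : m = 1 := by omega
    subst this
    simp
    exact le_or_gt x 1 |>.imp id (fun h => by linarith)
  · subst h0
    simp [h1]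
  · have h2 : (m : ℝ) - 1 = j := by
      rw [h1, Nat.cast_sub (by omega)]; simp
    rw [if_neg h0, if_pos h1, h2]
    simp only [mem_union, mem_Icc, mem_Ici, h0, false_or]
    constructor
    · rintro (h | h)
      · exact ⟨h.1, Or.inl h1⟩
      · exact ⟨h, Or.inl h1⟩
    · intro h; exact Or.inr h.1
  · simp [h0, h1]

lemma Icc_subset_pieceSet {m j : ℕ} (hj : j < m) :
    Icc ((j : ℝ) / m) (((j : ℝ) + 1) / m) ⊆ pieceSet m j := by
  intro x hx
  rw [mem_pieceSet hj]
  exact ⟨Or.inr hx.1, Or.inr hx.2⟩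

lemma ordConnected_pieceSet {m j : ℕ} (hj : j < m) : OrdConnected (pieceSet m j) := by
  refine ⟨fun x hx y hy z hz => ?_⟩
  rw [mem_pieceSet hj] at *
  exact ⟨hx.1.imp id (fun h => h.trans hz.1), hy.2.imp id (fun h => hz.2.trans h)⟩

lemma pieceSet_subset_closure {m j : ℕ} (hj : j < m) :
    pieceSet m j ⊆ closure (interior (pieceSet m j)) := by
  have hm : (0 : ℝ) < m := by exact_mod_cast (by omega : 0 < m)
  have hc : Convex ℝ (pieceSet m j) := (ordConnected_pieceSet hj).convex
  have hne : (interior (pieceSet m j)).Nonempty := by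
    have h1 : Ioo ((j : ℝ) / m) (((j : ℝ) + 1) / m) ⊆ interior (pieceSet m j) :=
      interior_maximal (Ioo_subset_Icc_self.trans (Icc_subset_pieceSet hj)) isOpen_Ioo
    refine Set.Nonempty.mono h1 (nonempty_Ioo.2 ?_)
    gcongr; linarith
  rw [hc.closure_interior_eq_closure_of_nonempty_interior hne]
  exact subset_closure

lemma exists_piece {m : ℕ} (hm : 1 ≤ m) (x : ℝ) : ∃ j, j < m ∧ x ∈ pieceSet m j ∧
    (0 ≤ x → (j : ℝ) / m ≤ x) ∧ (x < 1 → x < ((j : ℝ) + 1) / m) := by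
  have hm' : (0 : ℝ) < m := by exact_mod_cast hm
  have key : ∀ j : ℕ, j < m → ((j = 0 ∧ x ≤ 0) ∨ (j : ℝ) / m ≤ x) →
      ((j = m - 1 ∧ 1 ≤ x) ∨ x < ((j : ℝ) + 1) / m) → ∃ j, j < m ∧ x ∈ pieceSet m j ∧
    (0 ≤ x → (j : ℝ) / m ≤ x) ∧ (x < 1 → x < ((j : ℝ) + 1) / m) := by
    intro j hj h1 h2
    refine ⟨j, hj, ?_, ?_, ?_⟩
    · rw [mem_pieceSet hj]
      exact ⟨h1.imp (fun h => h.1) id, h2.imp (fun h => h.1) le_of_lt⟩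
    · intro hx
      rcases h1 with h | h
      · rw [h.1]; simpa using hx
      · exact h
    · intro hx
      rcases h2 with h | h
      · linarith [h.2]
      · exact h
  by_cases hx0 : x < 0
  · refine key 0 (by omega) (Or.inl ⟨rfl, hx0.le⟩) (Or.inr ?_)
    have : (0 : ℝ) < ((0 : ℕ) + 1 : ℝ) / m := by simp; omega
    linarith
  push Not at hx0
  by_cases hx1 : 1 ≤ x
  · refine key (m - 1) (by omega) (Or.inr ?_) (Or.inl ⟨rfl, hx1⟩)
    have : ((m - 1 : ℕ) : ℝ) / m ≤ 1 := by
      rw [div_le_one hm']; exact_mod_cast Nat.sub_le _ _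
    linarith
  push Not at hx1
  have hfl := Nat.floor_le (a := x * m) (by positivity)
  have hfl2 := Nat.lt_floor_add_one (x * m)
  refine key ⌊x * m⌋₊ ?_ (Or.inr ?_) (Or.inr ?_)
  · rw [Nat.floor_lt (by positivity)]
    nlinarith
  · rw [div_le_iff₀ hm']; exact hfl
  · rw [lt_div_iff₀ hm']; exact hfl2

/-- global version of spline predicate with parity boundary conditions -/
def Sp (m p b : ℕ) (u : ℝ → ℝ) : Prop :=
  ContDiff ℝ (p - 1 : ℕ) u ∧
  (∀ j < m, ∃ q : Polynomial ℝ, q.natDegree ≤ p ∧ ∀ x ∈ pieceSet m j, u x = q.eval x) ∧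
  ∀ k < p, k % 2 = b → iteratedDeriv k u 0 = 0 ∧ iteratedDeriv k u 1 = 0

lemma IsSpline.contDiff {m p : ℕ} (hm : 1 ≤ m) {u : ℝ → ℝ} (hu : IsSpline m p u) :
    ContDiff ℝ (p - 1 : ℕ) u := by
  have hm' : (0 : ℝ) < m := by exact_mod_cast hm
  rw [contDiff_iff_contDiffAt]
  intro x
  by_cases hx0 : x ≤ 0
  · obtain ⟨q, -, hq⟩ := hu.2 0 (by omega)
    have : u =ᶠ[nhds x] fun y => q.eval y := by
      have : Iio ((1 : ℝ) / m) ∈ nhds x := Iio_mem_nhds (by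
        have : 0 < (1 : ℝ) / m := by positivity
        linarith)
      filter_upwards [this] with y hy
      apply hq
      rw [mem_pieceSet (by omega)]
      refine ⟨Or.inl rfl, Or.inr ?_⟩
      simpa using (le_of_lt (mem_Iio.1 hy))
    exact (ContDiffAt.congr_of_eventuallyEq (by simpa using (q.contDiff_aeval (𝕜 := ℝ) (n := ((p - 1 : ℕ) : WithTop ℕ∞))).contDiffAt) this)
  by_cases hx1 : 1 ≤ x
  · obtain ⟨q, -, hq⟩ := hu.2 (m - 1) (by omega)
    have : u =ᶠ[nhds x] fun y => q.eval y := by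
      have : Ioi (((m - 1 : ℕ) : ℝ) / m) ∈ nhds x := Ioi_mem_nhds (by
        have : ((m - 1 : ℕ) : ℝ) / m < 1 := by
          rw [div_lt_one hm']; exact_mod_cast (by omega)
        linarith)
      filter_upwards [this] with y hy
      apply hq
      rw [mem_pieceSet (by omega)]
      exact ⟨Or.inr (le_of_lt hy), Or.inl rfl⟩
    exact (ContDiffAt.congr_of_eventuallyEq (by simpa using (q.contDiff_aeval (𝕜 := ℝ) (n := ((p - 1 : ℕ) : WithTop ℕ∞))).contDiffAt) this)
  push Not at hx0 hx1
  exact hu.1.contDiffAt (Ioo_mem_nhds hx0 hx1)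

lemma sp_iff {m p : ℕ} (hm : 1 ≤ m) {u : ℝ → ℝ} : IsSpline0 m p u ↔ Sp m p 1 u := by
  constructor
  · intro h
    refine ⟨h.1.contDiff hm, h.1.2, fun k hk hk2 => ?_⟩
    have := h.2 (k / 2) (by omega)
    rwa [show 2 * (k / 2) + 1 = k by omega] at this
  · intro h
    exact ⟨⟨h.1.contDiffOn, h.2.1⟩, fun l hl => h.2.2 _ hl (by omega)⟩

lemma Sp.continuous {m p b : ℕ} {u : ℝ → ℝ} (h : Sp m p b u) : Continuous u := h.1.continuous

lemma Sp.contDiff' {m p b : ℕ} {u : ℝ → ℝ} (h : Sp m (p + 1) b u) (hp : 1 ≤ p) :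
    ContDiff ℝ 1 u := by
  refine h.1.of_le ?_
  simp only [Nat.add_sub_cancel]
  exact_mod_cast hp

lemma Sp.deriv {m p b : ℕ} (hb : b ≤ 1) (hp : 1 ≤ p) {u : ℝ → ℝ} (h : Sp m (p + 1) b u) :
    Sp m p (1 - b) (deriv u) := by
  have h1 := h.contDiff' hp
  have hcd : Continuous (_root_.deriv u) := h1.continuous_deriv le_rfl
  refine ⟨?_, ?_, ?_⟩
  · have h2 := h.1
    have : ((p + 1 - 1 : ℕ) : WithTop ℕ∞) = ((p - 1 : ℕ) : WithTop ℕ∞) + 1 := by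
      exact_mod_cast (by omega)
    rw [this, contDiff_succ_iff_deriv] at h2
    exact h2.2.2
  · intro j hj
    obtain ⟨q, hq, hq2⟩ := h.2.1 j hj
    refine ⟨q.derivative, ?_, ?_⟩
    · have := q.natDegree_derivative_le
      omega
    · have : EqOn (_root_.deriv u) (fun x => q.derivative.eval x) (interior (pieceSet m j)) := by
        intro x hx
        have : u =ᶠ[nhds x] fun y => q.eval y := by
          filter_upwards [mem_interior_iff_mem_nhds.1 hx] with y hy using hq2 y hy
        rw [this.deriv_eq]
        simp
      intro x hx
      exact this.closure hcd (by fun_prop) (pieceSet_subset_closure hj hx)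
  · intro k hk hk2
    have := h.2.2 (k + 1) (by omega) (by omega)
    rwa [iteratedDeriv_succ'] at this

lemma exists_antideriv (q : Polynomial ℝ) {p : ℕ} (hq : q.natDegree ≤ p) :
    ∃ Q : Polynomial ℝ, Q.natDegree ≤ p + 1 ∧ Q.derivative = q := by
  refine ⟨∑ i ∈ Finset.range (p + 1), Polynomial.C (q.coeff i / (i + 1)) * Polynomial.X ^ (i + 1),
    ?_, ?_⟩
  · apply Polynomial.natDegree_sum_le_of_forall_le
    intro i hi
    have := Finset.mem_range.1 hi
    exact (Polynomial.natDegree_C_mul_X_pow_le _ _).trans (by omega)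
  · conv_rhs => rw [q.as_sum_range_C_mul_X_pow' (n := p + 1) (by omega)]
    simp only [Polynomial.derivative_sum, Polynomial.derivative_C_mul_X_pow]
    refine Finset.sum_congr rfl fun i _ => ?_
    congr 2
    push_cast
    field_simp

lemma hasDerivAt_prim {y : ℝ → ℝ} (hy : Continuous y) (c x : ℝ) :
    HasDerivAt (fun x => c + ∫ t in (0 : ℝ)..x, y t) (y x) x :=
  (hy.integral_hasStrictDerivAt 0 x).hasDerivAt.const_add c

lemma deriv_prim {y : ℝ → ℝ} (hy : Continuous y) (c : ℝ) :
    deriv (fun x => c + ∫ t in (0 : ℝ)..x, y t) = y :=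
  funext fun x => (hasDerivAt_prim hy c x).deriv

lemma Sp.prim {m p b : ℕ} (hb : b ≤ 1) (hp : 1 ≤ p) {y : ℝ → ℝ} (h : Sp m p (1 - b) y) (c : ℝ)
    (hc : b = 0 → c = 0 ∧ ∫ t in (0 : ℝ)..1, y t = 0) :
    Sp m (p + 1) b (fun x => c + ∫ t in (0 : ℝ)..x, y t) := by
  have hy := h.continuous
  refine ⟨?_, ?_, ?_⟩
  · have : ((p + 1 - 1 : ℕ) : WithTop ℕ∞) = ((p - 1 : ℕ) : WithTop ℕ∞) + 1 := by
      exact_mod_cast (by omega)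
    rw [this, contDiff_succ_iff_deriv]
    refine ⟨fun x => (hasDerivAt_prim hy c x).differentiableAt, ?_, ?_⟩
    · intro h; exact absurd h (by simp)
    · rw [deriv_prim hy]; exact h.1
  · intro j hj
    obtain ⟨q, hq, hq2⟩ := h.2.1 j hj
    obtain ⟨Q, hQ, hQ2⟩ := exists_antideriv q hq
    set x0 : ℝ := (j : ℝ) / m
    have hx0 : x0 ∈ pieceSet m j := Icc_subset_pieceSet hj ⟨le_rfl, by
      have hm : (0 : ℝ) < m := by exact_mod_cast (by omega : 0 < m)
      simp only [x0]; gcongr; linarith⟩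
    refine ⟨Q + Polynomial.C (c + (∫ t in (0 : ℝ)..x0, y t) - Q.eval x0), ?_, ?_⟩
    · rw [Polynomial.natDegree_add_C]; exact hQ
    · intro x hx
      have e1 : ∫ t in (0 : ℝ)..x, y t = (∫ t in (0 : ℝ)..x0, y t) + ∫ t in x0..x, y t :=
        (intervalIntegral.integral_add_adjacent_intervals (hy.intervalIntegrable _ _)
          (hy.intervalIntegrable _ _)).symm
      have e2 : ∫ t in x0..x, y t = ∫ t in x0..x, q.eval t := by
        apply intervalIntegral.integral_congr
        intro t ht
        exact hq2 t ((ordConnected_pieceSet hj).uIcc_subset hx0 hx ht)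
      have e3 : ∫ t in x0..x, q.eval t = Q.eval x - Q.eval x0 := by
        apply intervalIntegral.integral_eq_sub_of_hasDerivAt
        · intro t _
          rw [← hQ2]; exact Q.hasDerivAt t
        · exact (by fun_prop : Continuous fun t => q.eval t).intervalIntegrable _ _
      simp only [e1, e2, e3, Polynomial.eval_add, Polynomial.eval_C]
      ring
  · intro k hk hkb
    rcases k with _ | k
    · obtain ⟨h1, h2⟩ := hc (by omega)
      simp [h1, h2]
    · rw [iteratedDeriv_succ', deriv_prim hy]
      exact h.2.2 k (by omega) (by omega)

lemma Sp.add {m p b : ℕ} {u v : ℝ → ℝ} (hu : Sp m p b u) (hv : Sp m p b v) :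
    Sp m p b (u + v) := by
  refine ⟨hu.1.add hv.1, fun j hj => ?_, fun k hk hkb => ?_⟩
  · obtain ⟨q, hq, hq2⟩ := hu.2.1 j hj
    obtain ⟨r, hr, hr2⟩ := hv.2.1 j hj
    refine ⟨q + r, Polynomial.natDegree_add_le_of_degree_le hq hr, fun x hx => ?_⟩
    simp [hq2 x hx, hr2 x hx]
  · have hk' : ((k : ℕ) : WithTop ℕ∞) ≤ ((p - 1 : ℕ) : WithTop ℕ∞) := by
      exact_mod_cast (by omega)
    have e : ∀ x, iteratedDeriv k (u + v) x = iteratedDeriv k u x + iteratedDeriv k v x :=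
      fun x => iteratedDeriv_add (hu.1.of_le hk').contDiffAt (hv.1.of_le hk').contDiffAt
    rw [e, e]
    obtain ⟨a1, a2⟩ := hu.2.2 k hk hkb
    obtain ⟨b1, b2⟩ := hv.2.2 k hk hkb
    simp [a1, a2, b1, b2]

lemma Sp.smul {m p b : ℕ} {u : ℝ → ℝ} (c : ℝ) (hu : Sp m p b u) :
    Sp m p b (c • u) := by
  refine ⟨contDiff_const.smul hu.1, fun j hj => ?_, fun k hk hkb => ?_⟩
  · obtain ⟨q, hq, hq2⟩ := hu.2.1 j hj
    refine ⟨c • q, (Polynomial.natDegree_smul_le _ _).trans hq, fun x hx => ?_⟩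
    simp [hq2 x hx]
  · have hk' : ((k : ℕ) : WithTop ℕ∞) ≤ ((p - 1 : ℕ) : WithTop ℕ∞) := by
      exact_mod_cast (by omega)
    have e : ∀ x, iteratedDeriv k (c • u) x = c • iteratedDeriv k u x :=
      fun x => iteratedDeriv_const_smul (hu.1.of_le hk').contDiffAt c
    rw [e, e]
    obtain ⟨a1, a2⟩ := hu.2.2 k hk hkb
    simp [a1, a2]

lemma Sp.const (m p : ℕ) (c : ℝ) : Sp m p 1 (fun _ => c) := by
  refine ⟨contDiff_const, fun j hj => ⟨Polynomial.C c, by simp, by simp⟩, fun k hk hkb => ?_⟩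
  have : k ≠ 0 := by rintro rfl; simp at hkb
  simp [iteratedDeriv_const, this]

lemma Sp.zero (m p b : ℕ) : Sp m p b 0 := by
  refine ⟨contDiff_const, fun j hj => ⟨0, by simp, by simp⟩, fun k hk hkb => ?_⟩
  have : iteratedDeriv k (0 : ℝ → ℝ) = 0 := by
    funext x
    have h2 := iteratedDeriv_const (𝕜 := ℝ) (n := k) (c := (0 : ℝ)) (x := x)
    simpa using h2
  simp [this]

lemma Sp.sub {m p b : ℕ} {u v : ℝ → ℝ} (hu : Sp m p b u) (hv : Sp m p b v) :
    Sp m p b (u - v) := by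
  have := hu.add (hv.smul (-1))
  have e : u - v = u + (-1 : ℝ) • v := by funext x; simp [sub_eq_add_neg]
  rwa [e]

def Vs (m p b : ℕ) : Submodule ℝ (ℝ → ℝ) where
  carrier := {u | Sp m p b u}
  add_mem' := fun h1 h2 => Sp.add h1 h2
  zero_mem' := Sp.zero m p b
  smul_mem' := fun c _ h => Sp.smul c h

def pt (m p j i : ℕ) : ℝ := ((j : ℝ) + (i : ℝ) / (p + 1)) / m

lemma pt_mem {m p j i : ℕ} (hj : j < m) (hi : i < p + 1) :
    pt m p j i ∈ Icc ((j : ℝ) / m) (((j : ℝ) + 1) / m) := by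
  have h1 : (0 : ℝ) ≤ (i : ℝ) / (p + 1) := by positivity
  have h2 : (i : ℝ) / (p + 1) ≤ 1 := by
    rw [div_le_one (by positivity)]; exact_mod_cast hi.le
  unfold pt
  constructor <;> gcongr
  linarith

lemma Sp.eq_zero {m p b : ℕ} (hm : 1 ≤ m) {u : ℝ → ℝ} (hu : Sp m p b u)
    (h : ∀ j < m, ∀ i < p + 1, u (pt m p j i) = 0) : u = 0 := by
  have hm' : (0 : ℝ) < m := by exact_mod_cast hm
  funext x
  obtain ⟨j, hj, hx, -⟩ := exists_piece hm x
  obtain ⟨q, hq, hq2⟩ := hu.2.1 j hj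
  have : q = 0 := by
    refine Polynomial.eq_zero_of_natDegree_lt_card_of_eval_eq_zero q
      (f := fun i : Fin (p + 1) => pt m p j i) ?_ ?_ ?_
    · intro i i' hii
      simp only [pt] at hii
      have : (0 : ℝ) < p + 1 := by positivity
      field_simp at hii
      have h3 : ((i : ℕ) : ℝ) = (i' : ℕ) := by linarith
      exact Fin.ext (by exact_mod_cast h3)
    · intro i
      rw [← hq2 _ (Icc_subset_pieceSet hj (pt_mem hj i.2))]
      exact h j hj i i.2
    · simp; omega
  rw [hq2 x hx, this]; simp

instance {m p b : ℕ} [NeZero m] : FiniteDimensional ℝ (Vs m p b) := by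
  let ev : Vs m p b →ₗ[ℝ] (Fin m → Fin (p + 1) → ℝ) :=
    { toFun := fun u j i => u.1 (pt m p j i)
      map_add' := fun u v => rfl
      map_smul' := fun c u => rfl }
  refine FiniteDimensional.of_injective ev ?_
  rw [← LinearMap.ker_eq_bot, LinearMap.ker_eq_bot']
  intro u hu
  apply Subtype.ext
  refine Sp.eq_zero (Nat.one_le_iff_ne_zero.2 (NeZero.ne m)) u.2 fun j hj i hi => ?_
  exact congrFun (congrFun hu ⟨j, hj⟩) ⟨i, hi⟩

lemma eq_zero_of_int_sq {f : ℝ → ℝ} (hf : Continuous f) (h : ∫ x in (0 : ℝ)..1, f x ^ 2 = 0)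
    {x : ℝ} (hx : x ∈ Icc (0 : ℝ) 1) : f x = 0 := by
  by_contra hne
  have := intervalIntegral.integral_pos (f := fun x => f x ^ 2) zero_lt_one
    (hf.pow 2).continuousOn (fun x _ => sq_nonneg _) ⟨x, hx, by positivity⟩
  linarith

lemma Sp.definite {m p b : ℕ} (hm : 1 ≤ m) {u : ℝ → ℝ} (hu : Sp m p b u)
    (h : ∫ x in (0 : ℝ)..1, u x ^ 2 = 0) : u = 0 := by
  have hm' : (0 : ℝ) < m := by exact_mod_cast hm
  refine hu.eq_zero hm fun j hj i hi => ?_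
  apply eq_zero_of_int_sq hu.continuous h
  have := pt_mem (p := p) hj hi
  refine ⟨le_trans (by positivity) this.1, this.2.trans ?_⟩
  rw [div_le_one hm']
  exact_mod_cast hj

lemma ii {f : ℝ → ℝ} (hf : Continuous f) {a b : ℝ} : IntervalIntegrable f volume a b :=
  hf.intervalIntegrable a b

lemma exists_proj {m p b : ℕ} (hm : 1 ≤ m) {g : ℝ → ℝ} (hg : Continuous g) :
    ∃ y, Sp m p b y ∧ ∀ z, Sp m p b z → ∫ x in (0 : ℝ)..1, (g x - y x) * z x = 0 := by
  have : NeZero m := ⟨by omega⟩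
  let Φ : Vs m p b →ₗ[ℝ] (Vs m p b →ₗ[ℝ] ℝ) :=
    LinearMap.mk₂ ℝ (fun u v => ∫ x in (0 : ℝ)..1, u.1 x * v.1 x)
      (by
        intro u u' v
        have h1 := Sp.continuous u.2
        have h2 := Sp.continuous u'.2
        have h3 := Sp.continuous v.2
        rw [← intervalIntegral.integral_add (ii (h1.fun_mul h3)) (ii (h2.fun_mul h3))]
        simp [add_mul])
      (by
        intro c u v
        rw [smul_eq_mul, ← intervalIntegral.integral_const_mul]
        simp [mul_assoc])
      (by
        intro v u u'
        have h1 := Sp.continuous u.2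
        have h2 := Sp.continuous u'.2
        have h3 := Sp.continuous v.2
        rw [← intervalIntegral.integral_add (ii (h3.fun_mul h1)) (ii (h3.fun_mul h2))]
        simp [mul_add])
      (by
        intro c u v
        rw [smul_eq_mul, ← intervalIntegral.integral_const_mul]
        simp [mul_left_comm])
  have hΦ : ∀ u v, Φ u v = ∫ x in (0 : ℝ)..1, u.1 x * v.1 x := fun u v => rfl
  have hinj : Function.Injective Φ := by
    rw [← LinearMap.ker_eq_bot, LinearMap.ker_eq_bot']
    intro u hu
    apply Subtype.ext
    refine Sp.definite hm u.2 ?_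
    have := hΦ u u
    rw [hu] at this
    simp only [pow_two]
    simpa using this.symm
  have hsurj : Function.Surjective Φ :=
    (LinearMap.injective_iff_surjective_of_finrank_eq_finrank
      (Subspace.dual_finrank_eq (K := ℝ) (V := Vs m p b)).symm).1 hinj
  let L : Vs m p b →ₗ[ℝ] ℝ :=
    { toFun := fun v => ∫ x in (0 : ℝ)..1, g x * v.1 x
      map_add' := by
        intro u u'
        have h1 := Sp.continuous u.2
        have h2 := Sp.continuous u'.2
        rw [← intervalIntegral.integral_add (ii (hg.fun_mul h1)) (ii (hg.fun_mul h2))]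
        simp [mul_add]
      map_smul' := by
        intro c u
        rw [smul_eq_mul, ← intervalIntegral.integral_const_mul]
        simp [mul_left_comm] }
  obtain ⟨y, hy⟩ := hsurj L
  refine ⟨y.1, y.2, fun z hz => ?_⟩
  have h1 := hΦ y ⟨z, hz⟩
  rw [hy] at h1
  have h2 : L ⟨z, hz⟩ = ∫ x in (0 : ℝ)..1, g x * z x := rfl
  have c1 := Sp.continuous y.2
  have c2 := Sp.continuous hz
  simp only [sub_mul]
  rw [intervalIntegral.integral_sub (ii (hg.fun_mul c2)) (ii (c1.fun_mul c2))]
  rw [← h2, h1]; simp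

lemma cs_abs {g : ℝ → ℝ} (hg : Continuous g) {a b : ℝ} (hab : a < b) :
    (∫ x in a..b, |g x|) ^ 2 ≤ (b - a) * ∫ x in a..b, g x ^ 2 := by
  set G := ∫ x in a..b, |g x| with hG
  have h0 : 0 ≤ ∫ x in a..b, (|g x| * (b - a) - G) ^ 2 :=
    intervalIntegral.integral_nonneg hab.le fun x _ => sq_nonneg _
  have e : ∀ x, (|g x| * (b - a) - G) ^ 2
      = (b - a) ^ 2 * g x ^ 2 - 2 * (b - a) * G * |g x| + G ^ 2 := by
    intro x
    rw [← sq_abs (g x)]; ring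
  simp only [e] at h0
  rw [intervalIntegral.integral_add (ii (by fun_prop)) (ii (by fun_prop)),
    intervalIntegral.integral_sub (ii (by fun_prop)) (ii (by fun_prop)),
    intervalIntegral.integral_const_mul, intervalIntegral.integral_const_mul, ← hG] at h0
  simp only [intervalIntegral.integral_const, smul_eq_mul] at h0
  have h2 : 0 ≤ (b - a) * ((b - a) * (∫ x in a..b, g x ^ 2) - G ^ 2) := by
    nlinarith
  have := nonneg_of_mul_nonneg_right h2 (by linarith)
  linarith

lemma local_err {g F : ℝ → ℝ} (hg : Continuous g) (hF : ∀ a b, F b - F a = ∫ x in a..b, g x)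
    {a b x : ℝ} (hab : a < b) (hx : x ∈ Icc a b) :
    (F x - (F a + (x - a) / (b - a) * (F b - F a))) ^ 2 ≤ (b - a) * ∫ x in a..b, g x ^ 2 := by
  refine le_trans ?_ (cs_abs hg hab)
  set G := ∫ x in a..b, |g x| with hG
  have hga : Continuous fun x => |g x| := hg.abs
  have hsplit : (∫ x in a..x, |g x|) + (∫ x in x..b, |g x|) = G :=
    intervalIntegral.integral_add_adjacent_intervals (ii hga) (ii hga)
  have p1 : 0 ≤ ∫ x in a..x, |g x| :=
    intervalIntegral.integral_nonneg hx.1 fun _ _ => abs_nonneg _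
  have p2 : 0 ≤ ∫ x in x..b, |g x| :=
    intervalIntegral.integral_nonneg hx.2 fun _ _ => abs_nonneg _
  have h1 : |F x - F a| ≤ G := by
    rw [hF]
    exact (intervalIntegral.abs_integral_le_integral_abs hx.1).trans (by linarith)
  have h2 : |F b - F x| ≤ G := by
    rw [hF]
    exact (intervalIntegral.abs_integral_le_integral_abs hx.2).trans (by linarith)
  have hba : 0 < b - a := by linarith
  have t0 : 0 ≤ (x - a) / (b - a) := div_nonneg (by linarith [hx.1]) hba.le
  have t1 : (x - a) / (b - a) ≤ 1 := by rw [div_le_one hba]; linarith [hx.2]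
  set θ := (x - a) / (b - a)
  rw [sq_le_sq]
  refine le_trans ?_ (le_abs_self G)
  rw [abs_le] at h1 h2 ⊢
  constructor <;> nlinarith

lemma isClosed_pieceSet (m j : ℕ) : IsClosed (pieceSet m j) := by
  unfold pieceSet
  apply IsClosed.union
  · split_ifs
    · exact isClosed_Iic
    · exact isClosed_Icc
  · split_ifs
    · exact isClosed_Ici
    · exact isClosed_empty

def idx (m : ℕ) (x : ℝ) : ℕ := min ⌊x * m⌋₊ (m - 1)

def lin (m : ℕ) (F : ℝ → ℝ) (j : ℕ) (x : ℝ) : ℝ :=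
  F ((j : ℝ) / m) + (x - (j : ℝ) / m) * m * (F (((j : ℝ) + 1) / m) - F ((j : ℝ) / m))

lemma lin_idx {m j : ℕ} (F : ℝ → ℝ) (hj : j < m) {x : ℝ} (hx : x ∈ pieceSet m j) :
    lin m F (idx m x) x = lin m F j x := by
  have hm : (0 : ℝ) < m := by exact_mod_cast (by omega : 0 < m)
  rw [mem_pieceSet hj] at hx
  rcases lt_trichotomy (idx m x) j with h | h | h
  · exfalso
    have hj0 : j ≠ 0 := by omega
    have h1 : (j : ℝ) / m ≤ x := hx.1.resolve_left hj0
    rw [div_le_iff₀ hm] at h1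
    have h2 := Nat.le_floor h1
    unfold idx at h
    omega
  · rw [h]
  · have h1 : j ≠ m - 1 := by unfold idx at h; omega
    have h2 := hx.2.resolve_left h1
    rw [le_div_iff₀ hm] at h2
    have h3 : idx m x ≤ ⌊x * m⌋₊ := min_le_left _ _
    rw [Nat.le_floor_iff' (by omega)] at h3
    have h4 : idx m x ≤ j + 1 := by exact_mod_cast h3.trans h2
    have h5 : idx m x = j + 1 := by omega
    rw [h5] at h3 ⊢
    have h6 : x = ((j : ℝ) + 1) / m := by
      rw [eq_div_iff hm.ne']; push_cast at h3; linarith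
    subst h6
    unfold lin
    push_cast
    field_simp
    ring

lemma knot_sum {m : ℕ} (hm : 1 ≤ m) {f : ℝ → ℝ}
    (hf : ∀ j < m, IntervalIntegrable f volume ((j : ℝ) / m) (((j : ℝ) + 1) / m)) :
    IntervalIntegrable f volume 0 1 ∧
    ∑ j ∈ Finset.range m, ∫ x in ((j : ℝ) / m)..(((j : ℝ) + 1) / m), f x
      = ∫ x in (0 : ℝ)..1, f x := by
  have hm' : (m : ℝ) ≠ 0 := by exact_mod_cast (by omega : m ≠ 0)
  have h1 := intervalIntegral.sum_integral_adjacent_intervals (μ := volume) (f := f)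
    (a := fun j : ℕ => (j : ℝ) / m) (n := m) (by
      intro k hk; have := hf k hk; push_cast; exact this)
  have h2 := IntervalIntegrable.trans_iterate (μ := volume) (f := f)
    (a := fun j : ℕ => (j : ℝ) / m) (n := m) (by
      intro k hk; have := hf k hk; push_cast; exact this)
  push_cast at h1 h2
  rw [div_self hm', zero_div] at h1 h2
  exact ⟨h2, h1⟩

def App (m p b : ℕ) : Prop := ∀ g : ℝ → ℝ, Continuous g → (b = 0 → ∫ x in (0 : ℝ)..1, g x = 0) →
  ∃ w, Sp m p b w ∧
    (m : ℝ) ^ 2 * ∫ x in (0 : ℝ)..1, ((∫ t in (0 : ℝ)..x, g t) - w x) ^ 2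
      ≤ ∫ x in (0 : ℝ)..1, g x ^ 2

lemma app_base {m b : ℕ} (hm : 1 ≤ m) : App m 1 b := by
  intro g hg hb
  have hm' : (0 : ℝ) < m := by exact_mod_cast hm
  set F : ℝ → ℝ := fun x => ∫ t in (0 : ℝ)..x, g t with hFdef
  have hF : ∀ a b, F b - F a = ∫ x in a..b, g x := fun a b =>
    intervalIntegral.integral_interval_sub_left (ii hg) (ii hg)
  have hFc : Continuous F := intervalIntegral.continuous_primitive (fun a b => ii hg) 0
  set w : ℝ → ℝ := fun x => lin m F (idx m x) x with hw
  have hwp : ∀ j < m, ∀ x ∈ pieceSet m j, w x = lin m F j x := fun j hj x hx => lin_idx F hj hx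
  have hwc : Continuous w := by
    refine (locallyFinite_of_finite (fun j : Fin m => pieceSet m j)).continuous ?_ ?_ ?_
    · rw [eq_univ_iff_forall]
      intro x
      obtain ⟨j, hj, hx, -⟩ := exists_piece hm x
      exact mem_iUnion.2 ⟨⟨j, hj⟩, hx⟩
    · intro j; exact isClosed_pieceSet _ _
    · intro j
      refine ContinuousOn.congr (f := lin m F j) ?_ (hwp j j.2)
      unfold lin
      fun_prop
  have w0 : w 0 = F 0 := by
    rw [hwp 0 (by omega) 0 (Icc_subset_pieceSet (by omega) ⟨by simp, by positivity⟩)]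
    simp [lin]
  have w1 : w 1 = F 1 := by
    have e1 : (((m - 1 : ℕ) : ℝ) + 1) / m = 1 := by
      rw [Nat.cast_sub hm]; push_cast; rw [sub_add_cancel]; exact div_self hm'.ne'
    have e2 : 1 - ((m - 1 : ℕ) : ℝ) / m = 1 / m := by
      rw [Nat.cast_sub hm]; push_cast; field_simp; ring
    rw [hwp (m - 1) (by omega) 1 ((mem_pieceSet (by omega) _).2 ⟨Or.inr (by
      have : 0 < 1 / (m : ℝ) := by positivity
      linarith), Or.inl rfl⟩)]
    unfold lin
    rw [e1, e2]; field_simp; ring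
  refine ⟨w, ⟨?_, ?_, ?_⟩, ?_⟩
  · simpa using (contDiff_zero (𝕜 := ℝ)).2 hwc
  · intro j hj
    refine ⟨Polynomial.C (F ((j : ℝ) / m)) + (Polynomial.X - Polynomial.C ((j : ℝ) / m)) *
      Polynomial.C (m * (F (((j : ℝ) + 1) / m) - F ((j : ℝ) / m))), by compute_degree, ?_⟩
    intro x hx
    rw [hwp j hj x hx]
    simp [lin]; ring
  · intro k hk hkb
    have : k = 0 := by omega
    subst this
    have h1 := hb (by omega)
    simp only [iteratedDeriv_zero, w0, w1]
    exact ⟨by simp [hFdef], by simpa [hFdef] using h1⟩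
  · have hc : Continuous fun x => (F x - w x) ^ 2 := by fun_prop
    have hc2 : Continuous fun x => (g x) ^ 2 := by fun_prop
    rw [← (knot_sum hm (fun j _ => ii hc)).2, ← (knot_sum hm (fun j _ => ii hc2)).2,
      Finset.mul_sum]
    refine Finset.sum_le_sum fun j hj => ?_
    have hj := Finset.mem_range.1 hj
    set a : ℝ := (j : ℝ) / m
    set b : ℝ := ((j : ℝ) + 1) / m
    have hba : b - a = 1 / m := by simp only [a, b]; field_simp; ring
    have hab : a < b := by
      have : 0 < 1 / (m : ℝ) := by positivity
      linarith
    have hle : ∫ x in a..b, (F x - w x) ^ 2 ≤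
        ∫ x in a..b, (b - a) * ∫ x in a..b, g x ^ 2 := by
      apply intervalIntegral.integral_mono_on hab.le (ii hc) (ii continuous_const)
      intro x hx
      have := local_err hg hF hab hx
      rw [hwp j hj x (Icc_subset_pieceSet hj hx)]
      have e : lin m F j x = F a + (x - a) / (b - a) * (F b - F a) := by
        rw [hba]; simp only [lin, a, b]; field_simp
      rw [e]; exact this
    rw [intervalIntegral.integral_const, smul_eq_mul, hba] at hle
    calc (m : ℝ) ^ 2 * ∫ x in a..b, (F x - w x) ^ 2
        ≤ (m : ℝ) ^ 2 * (1 / m * (1 / m * ∫ x in a..b, g x ^ 2)) := by gcongr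
      _ = _ := by field_simp

lemma app_step {m p b : ℕ} (hm : 1 ≤ m) (hb : b ≤ 1) (hp : 1 ≤ p) (hA : App m p (1 - b))
    (g : ℝ → ℝ) (hg : Continuous g) (hgb : b = 0 → ∫ x in (0 : ℝ)..1, g x = 0) :
    ∃ w, Sp m (p + 1) b w ∧
      (m : ℝ) ^ 2 * ∫ x in (0 : ℝ)..1, ((∫ t in (0 : ℝ)..x, g t) - w x) ^ 2
        ≤ ∫ x in (0 : ℝ)..1, g x ^ 2 ∧
      ∫ x in (0 : ℝ)..1, deriv w x ^ 2 ≤ ∫ x in (0 : ℝ)..1, g x ^ 2 := by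
  have hm' : (0 : ℝ) < m := by exact_mod_cast hm
  obtain ⟨y, hy, hyo⟩ := exists_proj (p := p) (b := 1 - b) hm hg
  have hyc := hy.continuous
  set e : ℝ → ℝ := fun x => g x - y x with he
  have hec : Continuous e := by fun_prop
  set E : ℝ → ℝ := fun x => ∫ t in (0 : ℝ)..x, e t with hE
  have hEc : Continuous E := intervalIntegral.continuous_primitive (fun a b => ii hec) 0
  have hE0 : E 0 = 0 := by simp [hE]
  set c : ℝ := if b = 0 then 0 else ∫ x in (0 : ℝ)..1, E x with hc
  have hyb : b = 0 → ∫ x in (0 : ℝ)..1, e x = 0 := by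
    rintro rfl
    have := hyo _ (Sp.const m p 1)
    simpa using this
  have hesub : (∫ x in (0 : ℝ)..1, e x) = (∫ x in (0 : ℝ)..1, g x) - ∫ x in (0 : ℝ)..1, y x :=
    intervalIntegral.integral_sub (ii hg) (ii hyc)
  have hw : Sp m (p + 1) b (fun x => c + ∫ t in (0 : ℝ)..x, y t) := by
    refine hy.prim hb hp c fun h0 => ⟨by simp [hc, h0], ?_⟩
    have h1 := hyb h0
    have h2 := hgb h0
    linarith
  set r : ℝ → ℝ := fun x => E x - c with hr
  have hrc : Continuous r := by fun_prop
  have hrd : ∀ x, HasDerivAt r (e x) x := fun x =>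
    ((hec.integral_hasStrictDerivAt 0 x).hasDerivAt).sub_const c
  set R : ℝ → ℝ := fun x => ∫ t in (0 : ℝ)..x, r t with hR
  have hRd : ∀ x, HasDerivAt R (r x) x := fun x =>
    ((hrc.integral_hasStrictDerivAt 0 x).hasDerivAt)
  have hRc : Continuous R := intervalIntegral.continuous_primitive (fun a b => ii hrc) 0
  have hR0 : R 0 = 0 := by simp [hR]
  have hr1 : b = 0 → r 1 = 0 := by
    intro h0
    simp [hr, hE, hc, h0]
    exact hyb h0
  have hR1 : b = 1 → R 1 = 0 := by
    intro h0
    have : R 1 = (∫ x in (0 : ℝ)..1, E x) - ∫ x in (0 : ℝ)..1, c :=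
      intervalIntegral.integral_sub (ii hEc) (ii continuous_const)
    rw [this]
    simp [hc, h0]
  have hbd : r 1 * R 1 = 0 := by
    rcases Nat.le_one_iff_eq_zero_or_eq_one.1 hb with h | h
    · rw [hr1 h]; simp
    · rw [hR1 h]; simp
  have hibp : ∫ x in (0 : ℝ)..1, r x * r x = - ∫ x in (0 : ℝ)..1, e x * R x := by
    rw [intervalIntegral.integral_mul_deriv_eq_deriv_mul (fun x _ => hrd x) (fun x _ => hRd x)
      (ii hec) (ii hrc), hbd, hR0]
    simp
  obtain ⟨z, hz, hzerr⟩ := hA r hrc (fun h => hR1 (by omega))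
  have hzc := hz.continuous
  have hzo := hyo z hz
  set X := ∫ x in (0 : ℝ)..1, r x ^ 2 with hX
  have hX2 : X = - ∫ x in (0 : ℝ)..1, e x * (R x - z x) := by
    have : ∫ x in (0 : ℝ)..1, e x * (R x - z x)
        = (∫ x in (0 : ℝ)..1, e x * R x) - ∫ x in (0 : ℝ)..1, e x * z x := by
      rw [← intervalIntegral.integral_sub (ii (by fun_prop)) (ii (by fun_prop))]
      simp only [mul_sub]
    rw [this, hX]
    simp only [pow_two]
    rw [hibp, hzo]; simp
  have hX3 : 2 * X ≤ (∫ x in (0 : ℝ)..1, e x ^ 2) / m ^ 2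
      + m ^ 2 * ∫ x in (0 : ℝ)..1, (R x - z x) ^ 2 := by
    rw [hX2, ← intervalIntegral.integral_neg, ← intervalIntegral.integral_const_mul,
      ← intervalIntegral.integral_const_mul, ← intervalIntegral.integral_div,
      ← intervalIntegral.integral_add (ii (by fun_prop)) (ii (by fun_prop))]
    apply intervalIntegral.integral_mono_on zero_le_one (ii (by fun_prop)) (ii (by fun_prop))
    intro x _
    have h1 := sq_nonneg (e x / m + m * (R x - z x))
    have h2 : (e x / m + m * (R x - z x)) ^ 2
      = e x ^ 2 / m ^ 2 + 2 * (e x * (R x - z x)) + m ^ 2 * (R x - z x) ^ 2 := by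
      field_simp; ring
    linarith
  have hX4 : (m : ℝ) ^ 2 * X ≤ ∫ x in (0 : ℝ)..1, e x ^ 2 := by
    have : X ≤ (∫ x in (0 : ℝ)..1, e x ^ 2) / m ^ 2 := by linarith
    rw [le_div_iff₀ (by positivity)] at this
    linarith
  have hpy : ∫ x in (0 : ℝ)..1, g x ^ 2
      = (∫ x in (0 : ℝ)..1, e x ^ 2) + ∫ x in (0 : ℝ)..1, y x ^ 2 := by
    have h1 := hyo y hy
    have : ∫ x in (0 : ℝ)..1, g x ^ 2 = ∫ x in (0 : ℝ)..1,
        (e x ^ 2 + y x ^ 2 + 2 * ((g x - y x) * y x)) := by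
      congr 1; funext x; simp only [he]; ring
    rw [this, intervalIntegral.integral_add (ii (by fun_prop)) (ii (by fun_prop)),
      intervalIntegral.integral_add (ii (by fun_prop)) (ii (by fun_prop)),
      intervalIntegral.integral_const_mul, h1]
    simp
  have n1 : 0 ≤ ∫ x in (0 : ℝ)..1, e x ^ 2 :=
    intervalIntegral.integral_nonneg zero_le_one fun _ _ => sq_nonneg _
  have n2 : 0 ≤ ∫ x in (0 : ℝ)..1, y x ^ 2 :=
    intervalIntegral.integral_nonneg zero_le_one fun _ _ => sq_nonneg _
  refine ⟨_, hw, ?_, ?_⟩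
  · have : ∀ x, ((∫ t in (0 : ℝ)..x, g t) - (c + ∫ t in (0 : ℝ)..x, y t)) = r x := by
      intro x
      have : E x = (∫ t in (0 : ℝ)..x, g t) - ∫ t in (0 : ℝ)..x, y t :=
        intervalIntegral.integral_sub (ii hg) (ii hyc)
      simp only [hr, this]; ring
    simp only [this]
    linarith
  · rw [deriv_prim hyc]
    linarith

lemma app_all {m : ℕ} (hm : 1 ≤ m) {p : ℕ} (hp : 1 ≤ p) : ∀ b ≤ 1, App m p b := by
  induction p, hp using Nat.le_induction with
  | base => intro b _; exact app_base hm
  | succ p hp ih =>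
    intro b hb g hg hgb
    obtain ⟨w, h1, h2, -⟩ := app_step hm hb hp (ih (1 - b) (by omega)) g hg hgb
    exact ⟨w, h1, h2⟩

/-- inverse inequality, through the right derivative -/
def Inv (m : ℕ) (u : ℝ → ℝ) (d : ℝ → ℝ) : Prop :=
  (∀ x ∈ Ioo (0 : ℝ) 1, HasDerivWithinAt u (d x) (Ioi x) x) ∧
  IntervalIntegrable d volume 0 1 ∧ IntervalIntegrable (fun x => d x ^ 2) volume 0 1 ∧
  ∫ x in (0 : ℝ)..1, d x ^ 2 ≤ 12 * (m : ℝ) ^ 2 * ∫ x in (0 : ℝ)..1, u x ^ 2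

lemma lin_inv (A B a h : ℝ) (hh : 0 < h) :
    h ^ 2 * (∫ _ in a..(a + h), B ^ 2) ≤ 12 * ∫ x in a..(a + h), (A + B * x) ^ 2 := by
  have e : ∫ x in a..(a + h), (A + B * x) ^ 2
      = (A ^ 2 * (a + h) + A * B * (a + h) ^ 2 + B ^ 2 * (a + h) ^ 3 / 3)
        - (A ^ 2 * a + A * B * a ^ 2 + B ^ 2 * a ^ 3 / 3) := by
    apply intervalIntegral.integral_eq_sub_of_hasDerivAt
      (f := fun x => A ^ 2 * x + A * B * x ^ 2 + B ^ 2 * x ^ 3 / 3)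
    · intro x _
      have h1 := ((hasDerivAt_id x).const_mul (A ^ 2)).add
        (((hasDerivAt_pow 2 x).const_mul (A * B)).add
          (((hasDerivAt_pow 3 x).const_mul (B ^ 2)).div_const 3))
      convert h1 using 1
      · funext t; simp; ring
      · simp; ring
    · exact ii (by fun_prop)
  rw [e, intervalIntegral.integral_const, smul_eq_mul]
  nlinarith [mul_nonneg hh.le (sq_nonneg (2 * A + B * (2 * a + h)))]

lemma inv_base {m b : ℕ} (hm : 1 ≤ m) {u : ℝ → ℝ} (hu : Sp m 1 b u) : ∃ d, Inv m u d := by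
  have hm' : (0 : ℝ) < m := by exact_mod_cast hm
  have huc := hu.continuous
  set d : ℝ → ℝ := fun x => derivWithin u (Ioi x) x with hd
  have key : ∀ j < m, ∃ A B : ℝ, (∀ x ∈ Icc ((j : ℝ) / m) (((j : ℝ) + 1) / m), u x = A + B * x) ∧
      ∀ x ∈ Ico ((j : ℝ) / m) (((j : ℝ) + 1) / m), HasDerivWithinAt u B (Ioi x) x := by
    intro j hj
    obtain ⟨q, hq, hq2⟩ := hu.2.1 j hj
    have e : ∀ x ∈ Icc ((j : ℝ) / m) (((j : ℝ) + 1) / m), u x = q.coeff 0 + q.coeff 1 * x := by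
      intro x hx
      rw [hq2 x (Icc_subset_pieceSet hj hx), Polynomial.eq_X_add_C_of_natDegree_le_one hq]
      simp; ring
    refine ⟨q.coeff 0, q.coeff 1, e, ?_⟩
    intro x hx
    have h1 : HasDerivWithinAt (fun x => q.coeff 0 + q.coeff 1 * x) (q.coeff 1) (Ioi x) x := by
      have := ((hasDerivAt_id x).const_mul (q.coeff 1)).const_add (q.coeff 0)
      simpa using this.hasDerivWithinAt
    refine h1.congr_of_eventuallyEq ?_ (e x ⟨hx.1, hx.2.le⟩)
    filter_upwards [Ioo_mem_nhdsGT hx.2] with y hy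
    exact e y ⟨hx.1.trans hy.1.le, hy.2.le⟩
  have key2 : ∀ j < m, ∃ A B : ℝ,
      (∀ x ∈ Icc ((j : ℝ) / m) (((j : ℝ) + 1) / m), u x = A + B * x) ∧
      ∀ x ∈ uIoo ((j : ℝ) / m) (((j : ℝ) + 1) / m), d x = B := by
    intro j hj
    obtain ⟨A, B, h1, h2⟩ := key j hj
    refine ⟨A, B, h1, fun x hx => ?_⟩
    rw [uIoo_of_le (by gcongr; linarith)] at hx
    exact (h2 x ⟨hx.1.le, hx.2⟩).derivWithin (uniqueDiffWithinAt_Ioi x)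
  have i1 : ∀ j < m, IntervalIntegrable d volume ((j : ℝ) / m) (((j : ℝ) + 1) / m) := by
    intro j hj
    obtain ⟨A, B, h1, h2⟩ := key2 j hj
    exact IntervalIntegrable.congr_uIoo (f := fun _ => B) (ii continuous_const)
      fun x hx => (h2 x hx).symm
  have i2 : ∀ j < m, IntervalIntegrable (fun x => d x ^ 2) volume ((j : ℝ) / m)
      (((j : ℝ) + 1) / m) := by
    intro j hj
    obtain ⟨A, B, h1, h2⟩ := key2 j hj
    exact IntervalIntegrable.congr_uIoo (f := fun _ => B ^ 2) (ii continuous_const)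
      fun x hx => by simp only [h2 x hx]
  refine ⟨d, ?_, (knot_sum hm i1).1, (knot_sum hm i2).1, ?_⟩
  · intro x hx
    obtain ⟨j, hj, -, ha, hb⟩ := exists_piece hm x
    obtain ⟨A, B, -, h2⟩ := key j hj
    exact (h2 x ⟨ha hx.1.le, hb hx.2⟩).differentiableWithinAt.hasDerivWithinAt
  · have hc2 : Continuous fun x => (u x) ^ 2 := by fun_prop
    rw [← (knot_sum hm i2).2, ← (knot_sum hm (fun j _ => ii hc2)).2, Finset.mul_sum]
    refine Finset.sum_le_sum fun j hj => ?_
    obtain ⟨A, B, h1, h2⟩ := key2 j (Finset.mem_range.1 hj)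
    have e1 : ∫ x in ((j : ℝ) / m)..(((j : ℝ) + 1) / m), d x ^ 2
        = ∫ x in ((j : ℝ) / m)..(((j : ℝ) + 1) / m), B ^ 2 :=
      intervalIntegral.integral_congr_uIoo fun x hx => by simp only [h2 x hx]
    have e2 : ∫ x in ((j : ℝ) / m)..(((j : ℝ) + 1) / m), u x ^ 2
        = ∫ x in ((j : ℝ) / m)..(((j : ℝ) + 1) / m), (A + B * x) ^ 2 := by
      apply intervalIntegral.integral_congr
      intro x hx
      rw [uIcc_of_le (by gcongr; linarith)] at hx
      simp only [h1 x hx]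
    rw [e1, e2, show ((j : ℝ) + 1) / m = (j : ℝ) / m + 1 / m by ring]
    have h3 := lin_inv A B ((j : ℝ) / m) (1 / m) (by positivity)
    have h4 := mul_le_mul_of_nonneg_left h3 (by positivity : (0 : ℝ) ≤ (m : ℝ) ^ 2)
    calc _ = (m : ℝ) ^ 2 * ((1 / m) ^ 2 *
            ∫ x in ((j : ℝ) / m)..((j : ℝ) / m + 1 / m), B ^ 2) := by field_simp
      _ ≤ _ := h4
      _ = _ := by ring

lemma inv_step {m p b : ℕ} (hm : 1 ≤ m) (hb : b ≤ 1) (hp : 1 ≤ p) {u : ℝ → ℝ}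
    (hu : Sp m (p + 1) b u) (h : ∃ d, Inv m (deriv u) d) : Inv m u (deriv u) := by
  have hm' : (0 : ℝ) < m := by exact_mod_cast hm
  obtain ⟨d, d1, d2, d3, d4⟩ := h
  have h1 := hu.contDiff' hp
  have huc := hu.continuous
  have hcd : Continuous (deriv u) := h1.continuous_deriv le_rfl
  have hdu : ∀ x, HasDerivAt u (deriv u x) x := fun x =>
    (h1.differentiable one_ne_zero x).hasDerivAt
  refine ⟨fun x _ => (hdu x).hasDerivWithinAt, ii hcd, ii (by fun_prop), ?_⟩
  have hibp : ∫ x in (0 : ℝ)..1, deriv u x * deriv u x = - ∫ x in (0 : ℝ)..1, d x * u x := by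
    rw [intervalIntegral.integral_mul_deriv_eq_deriv_mul_of_hasDeriv_right (u' := d)
      hcd.continuousOn huc.continuousOn (by simpa using d1)
      (fun x _ => (hdu x).hasDerivWithinAt) d2 (ii hcd)]
    have hbd : deriv u 1 * u 1 = 0 ∧ deriv u 0 * u 0 = 0 := by
      rcases Nat.le_one_iff_eq_zero_or_eq_one.1 hb with h | h
      · have := hu.2.2 0 (by omega) (by omega)
        simp only [iteratedDeriv_zero] at this
        simp [this]
      · have := hu.2.2 1 (by omega) (by omega)
        simp only [iteratedDeriv_one] at this
        simp [this]
    rw [hbd.1, hbd.2]; simp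
  set G := ∫ x in (0 : ℝ)..1, deriv u x ^ 2 with hG
  have hG2 : G = - ∫ x in (0 : ℝ)..1, d x * u x := by
    rw [hG, ← hibp]; simp only [pow_two]
  have idu : IntervalIntegrable (fun x => d x * u x) volume 0 1 :=
    d2.mul_continuousOn huc.continuousOn
  have hineq : 2 * G ≤ (∫ x in (0 : ℝ)..1, d x ^ 2) / (12 * m ^ 2)
      + 12 * m ^ 2 * ∫ x in (0 : ℝ)..1, u x ^ 2 := by
    have iu : IntervalIntegrable (fun x => 12 * (m : ℝ) ^ 2 * u x ^ 2) volume 0 1 :=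
      ii (by fun_prop)
    rw [hG2, ← intervalIntegral.integral_neg, ← intervalIntegral.integral_const_mul,
      ← intervalIntegral.integral_const_mul, ← intervalIntegral.integral_div,
      ← intervalIntegral.integral_add (d3.div_const _) iu]
    apply intervalIntegral.integral_mono_on zero_le_one (idu.neg.const_mul 2)
      ((d3.div_const _).add iu)
    intro x _
    have h1 : 0 ≤ (d x + 12 * m ^ 2 * u x) ^ 2 / (12 * m ^ 2) := by positivity
    have h2 : (d x + 12 * m ^ 2 * u x) ^ 2 / (12 * m ^ 2)
      = d x ^ 2 / (12 * m ^ 2) + 2 * (d x * u x) + 12 * m ^ 2 * u x ^ 2 := by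
      field_simp; ring
    have h3 : 2 * (-(d x * u x)) ≤ d x ^ 2 / (12 * m ^ 2) + 12 * m ^ 2 * u x ^ 2 := by linarith
    exact h3
  have : (∫ x in (0 : ℝ)..1, d x ^ 2) / (12 * m ^ 2) ≤ G := by
    rw [div_le_iff₀ (by positivity)]; linarith
  linarith

lemma inv_all {m : ℕ} (hm : 1 ≤ m) {p : ℕ} (hp : 1 ≤ p) :
    ∀ b ≤ 1, ∀ u, Sp m p b u → ∃ d, Inv m u d := by
  induction p, hp using Nat.le_induction with
  | base => intro b _ u hu; exact inv_base hm hu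
  | succ p hp ih =>
    intro b hb u hu
    exact ⟨_, inv_step hm hb hp hu (ih (1 - b) (by omega) _ (hu.deriv hb hp))⟩

lemma int_Ioo (f : ℝ → ℝ) : ∫ x in Ioo (0 : ℝ) 1, f x = ∫ x in (0 : ℝ)..1, f x := by
  rw [intervalIntegral.integral_of_le zero_le_one, integral_Ioc_eq_integral_Ioo]

lemma l2_split {u v : ℝ → ℝ} (hu : Continuous u) (hv : Continuous v)
    (h : ∫ x in (0 : ℝ)..1, u x * v x = 0) :
    ∫ x in (0 : ℝ)..1, (u x + v x) ^ 2
      = (∫ x in (0 : ℝ)..1, u x ^ 2) + ∫ x in (0 : ℝ)..1, v x ^ 2 := by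
  have : ∫ x in (0 : ℝ)..1, (u x + v x) ^ 2
      = ∫ x in (0 : ℝ)..1, (u x ^ 2 + v x ^ 2 + 2 * (u x * v x)) := by
    congr 1; funext x; ring
  rw [this, intervalIntegral.integral_add (ii (by fun_prop)) (ii (by fun_prop)),
    intervalIntegral.integral_add (ii (by fun_prop)) (ii (by fun_prop)),
    intervalIntegral.integral_const_mul, h]
  simp

lemma sq_tri {f g k : ℝ → ℝ} (hf : Continuous f) (hg : Continuous g) (hk : Continuous k)
    (h : ∀ x, f x = g x + k x) :
    ∫ x in (0 : ℝ)..1, f x ^ 2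
      ≤ 2 * (∫ x in (0 : ℝ)..1, g x ^ 2) + 2 * ∫ x in (0 : ℝ)..1, k x ^ 2 := by
  rw [← intervalIntegral.integral_const_mul, ← intervalIntegral.integral_const_mul,
    ← intervalIntegral.integral_add (ii (by fun_prop)) (ii (by fun_prop))]
  apply intervalIntegral.integral_mono_on zero_le_one (ii (by fun_prop)) (ii (by fun_prop))
  intro x _
  rw [h]
  nlinarith [sq_nonneg (g x - k x)]

lemma main_semi {m p : ℕ} (hm : 1 ≤ m) (hp : 1 ≤ p) {u v : ℝ → ℝ} (hu : IsSpline m p u)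
    (hv : IsL2Proj0 m p u v) :
    (1 / 2 : ℝ) * h1semiSq u ≤ h1semiSq v + h1semiSq (u - v) ∧
      h1semiSq v + h1semiSq (u - v) ≤ 80 * h1semiSq u := by
  have hm' : (0 : ℝ) < m := by exact_mod_cast hm
  have hvs : Sp m p 1 v := (sp_iff hm).1 hv.1
  have hvo : ∀ w, Sp m p 1 w → ∫ x in (0 : ℝ)..1, (u x - v x) * w x = 0 := by
    intro w hw
    have := hv.2 w ((sp_iff hm).2 hw)
    rwa [ip0, int_Ioo] at this
  rcases Nat.eq_or_lt_of_le hp with h1 | h1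
  · subst h1
    have hus : Sp m 1 1 u := ⟨hu.contDiff hm, hu.2, fun k hk hk2 => by omega⟩
    have hd := hus.sub hvs
    have h0 : u - v = 0 := by
      refine hd.definite hm ?_
      have := hvo _ hd
      simp only [pow_two]
      exact this
    have huv : v = u := (sub_eq_zero.1 h0).symm
    have hz : h1semiSq (u - v) = 0 := by
      rw [h0]; simp [h1semiSq]
    have hn : 0 ≤ h1semiSq u := integral_nonneg fun x => sq_nonneg _
    rw [hz, huv]
    constructor <;> linarith
  · obtain ⟨n, rfl⟩ : ∃ n, p = n + 1 := ⟨p - 1, by omega⟩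
    have hn : 1 ≤ n := by omega
    have hu1 : ContDiff ℝ 1 u := (hu.contDiff hm).of_le (by
      simp only [Nat.add_sub_cancel]; exact_mod_cast hn)
    have hv1 := hvs.contDiff' hn
    have hgc : Continuous (deriv u) := hu1.continuous_deriv le_rfl
    have hvc : Continuous (deriv v) := hv1.continuous_deriv le_rfl
    have hud := hu1.differentiable one_ne_zero
    have hvd := hv1.differentiable one_ne_zero
    obtain ⟨w0, hw0, herr, hw0d⟩ := app_step hm le_rfl hn (app_all hm hn (1 - 1) (by omega))
      (deriv u) hgc (by simp)
    have hFTC : ∀ x, ∫ t in (0 : ℝ)..x, deriv u t = u x - u 0 := fun x =>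
      intervalIntegral.integral_deriv_eq_sub (fun t _ => hud t) (ii hgc)
    set w : ℝ → ℝ := w0 + fun _ => u 0 with hw
    have hws : Sp m (n + 1) 1 w := hw0.add (Sp.const _ _ _)
    have hw1 := hws.contDiff' hn
    have hwd := hw1.differentiable one_ne_zero
    have hwc : Continuous (deriv w) := hw1.continuous_deriv le_rfl
    have hdw : deriv w = deriv w0 := by
      funext x
      have : w = fun x => w0 x + u 0 := rfl
      rw [this, deriv_add_const]
    rw [← hdw] at hw0d
    have herr2 : (m : ℝ) ^ 2 * ∫ x in (0 : ℝ)..1, (u x - w x) ^ 2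
        ≤ ∫ x in (0 : ℝ)..1, deriv u x ^ 2 := by
      refine le_trans (le_of_eq ?_) herr
      congr 2; funext x; rw [hFTC]; simp only [hw, Pi.add_apply]; ring
    have hvw : Sp m (n + 1) 1 (v - w) := hvs.sub hws
    have hinv := (inv_step hm le_rfl hn hvw
      (inv_all hm hn (1 - 1) (by omega) _ (hvw.deriv le_rfl hn))).2.2.2
    have hdvw : ∀ x, deriv (v - w) x = deriv v x - deriv w x := fun x =>
      deriv_sub (hvd x) (hwd x)
    have hduv : ∀ x, deriv (u - v) x = deriv u x - deriv v x := fun x =>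
      deriv_sub (hud x) (hvd x)
    have hsplit := l2_split (u := fun x => u x - v x) (v := v - w)
      (hu1.continuous.sub hv1.continuous) hvw.continuous (hvo _ hvw)
    have hsplit2 : ∫ x in (0 : ℝ)..1, (u x - w x) ^ 2
        = (∫ x in (0 : ℝ)..1, (u x - v x) ^ 2) + ∫ x in (0 : ℝ)..1, (v - w) x ^ 2 := by
      rw [← hsplit]; congr 1; funext x; simp
    have n1 : 0 ≤ ∫ x in (0 : ℝ)..1, (u x - v x) ^ 2 :=
      intervalIntegral.integral_nonneg zero_le_one fun _ _ => sq_nonneg _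
    simp only [h1semiSq, int_Ioo, hduv]
    set U := ∫ x in (0 : ℝ)..1, deriv u x ^ 2
    have hk : ∫ x in (0 : ℝ)..1, deriv (v - w) x ^ 2 ≤ 12 * U := by
      have : (m : ℝ) ^ 2 * ∫ x in (0 : ℝ)..1, (v - w) x ^ 2
          ≤ (m : ℝ) ^ 2 * ∫ x in (0 : ℝ)..1, (u x - w x) ^ 2 := by
        gcongr; linarith
      linarith
    have t1 := sq_tri hvc hwc (k := deriv (v - w))
      ((hvw.contDiff' hn).continuous_deriv le_rfl) (fun x => by rw [hdvw]; ring)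
    have t2 := sq_tri (hgc.fun_sub hvc) hgc (k := fun x => - deriv v x) (by fun_prop)
      (fun x => by ring)
    have t3 := sq_tri hgc hvc (k := fun x => deriv u x - deriv v x) (by fun_prop)
      (fun x => by ring)
    simp only [neg_sq] at t2
    constructor <;> linarith

/-- Theorem `thm:stable-1d`: the `L²`-orthogonal splitting
`S = S₀ ⊕ S₁`, `u = Q₀u + (I − Q₀)u`, is `H¹`-stable uniformly in `h` and `p`:
there is a constant `c > 0` independent of `h = 1/m` and `p` with
`(1/2)|u|₁² ≤ |Q₀u|₁² + |u − Q₀u|₁² ≤ c|u|₁²` and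
`c⁻¹‖u‖²_{H¹} ≤ ‖Q₀u‖²_{H¹} + ‖u − Q₀u‖²_{H¹} ≤ c‖u‖²_{H¹}` for all `u ∈ S`. -/
theorem stable_splitting_1d :
    ∃ c : ℝ, 0 < c ∧ ∀ m p : ℕ, 1 ≤ m → 1 ≤ p →
      ∀ u v : ℝ → ℝ, IsSpline m p u → IsL2Proj0 m p u v →
        ((1 / 2 : ℝ) * h1semiSq u ≤ h1semiSq v + h1semiSq (u - v) ∧
          h1semiSq v + h1semiSq (u - v) ≤ c * h1semiSq u) ∧
        (c⁻¹ * h1normSq u ≤ h1normSq v + h1normSq (u - v) ∧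
          h1normSq v + h1normSq (u - v) ≤ c * h1normSq u) := by
  refine ⟨80, by norm_num, fun m p hm hp u v hu hv => ?_⟩
  have hs := main_semi hm hp hu hv
  refine ⟨hs, ?_⟩
  have huc : Continuous u := (hu.contDiff hm).continuous
  have hvc : Continuous v := (hv.1.1.contDiff hm).continuous
  have hL : l2normSq u = l2normSq (u - v) + l2normSq v := by
    have h0 := hv.2 v hv.1
    rw [ip0, int_Ioo] at h0
    have := l2_split (huc.sub hvc) hvc h0
    simp only [l2normSq, int_Ioo]
    rw [← this]; congr 1; funext x; simp
  have n1 : 0 ≤ l2normSq u := integral_nonneg fun x => sq_nonneg _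
  have n2 : 0 ≤ h1semiSq u := integral_nonneg fun x => sq_nonneg _
  unfold h1normSq
  obtain ⟨a, b⟩ := hs
  constructor
  · norm_num; linarith
  · linarith

end SplineMG
end
end
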